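/- arXiv:2206.05208 — 6 statements merged into one kernel-verified Lean document; each statement's English description precedes it below -/
import Mathlib

section
/- Let ℓ ≥ 1 and let R_ℓ be the picture language of all one-row pictures over the alphabet {a,b} whose single row is a word in (a^{ℓ−1} b)^+. Then every tiling system ({a,b}, Γ, T, π) recognizing R_ℓ satisfies |Γ| ≥ ℓ. -/
/-- A picture over alphabet `A`: a rectangular array with at least one row
and one column. -/
structure Picture (A : Type) : Type where
  rows : ℕ
  cols : ℕ
  rows_pos : 0 < rows
  cols_pos : 0 < cols
  pix : Fin rows → Fin cols → A

namespace Picture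

/-- Pixelwise projection of a picture along a map of alphabets. -/
def map {A B : Type} (f : A → B) (p : Picture A) : Picture B :=
  ⟨p.rows, p.cols, p.rows_pos, p.cols_pos, fun i j => f (p.pix i j)⟩

/-- The pixel at (i,j) (0-based), or `none` if out of range. -/
def pget {A : Type} (p : Picture A) (i j : ℕ) : Option A :=
  if h : i < p.rows ∧ j < p.cols then some (p.pix ⟨i, h.1⟩ ⟨j, h.2⟩) else none

/-- The pixel at position (i,j) of the bordered picture of `p`, where the
border symbol `#` is `none`; row 0 and column 0 are border rows, the content
occupies rows `1..p.rows` and columns `1..p.cols`, and every other position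
is a border (`#`) position. -/
def bpix {A : Type} (p : Picture A) (i j : ℕ) : Option A :=
  if h : 1 ≤ i ∧ i ≤ p.rows ∧ 1 ≤ j ∧ j ≤ p.cols then
    some (p.pix ⟨i - 1, by omega⟩ ⟨j - 1, by omega⟩)
  else none

end Picture

/-- A `k`-tile over `A ∪ {#}`, the border symbol `#` being `none`. -/
abbrev BTile (A : Type) (k : ℕ) := Fin k → Fin k → Option A

/-- Number of rows of the bordered version of `p` used for `k`-tiles:
one border row on top and at least one at the bottom, with as many extra
border rows at the bottom as needed for `k × k` subpictures to exist. -/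
def borderRows {A : Type} (p : Picture A) (k : ℕ) : ℕ := max (p.rows + 2) k

/-- Number of columns of the bordered version of `p` used for `k`-tiles. -/
def borderCols {A : Type} (p : Picture A) (k : ℕ) : ℕ := max (p.cols + 2) k

/-- The set of `k`-tiles of the bordered picture of `p`. -/
def tilesOf {A : Type} (k : ℕ) (p : Picture A) : Set (BTile A k) :=
  { t | ∃ i j : ℕ, i + k ≤ borderRows p k ∧ j + k ≤ borderCols p k ∧
      ∀ a b : Fin k, t a b = p.bpix (i + (a : ℕ)) (j + (b : ℕ)) }

/-- The `k`-strictly-locally-testable language defined by the tile set `T`: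
all pictures each of whose `k`-tiles (of the bordered picture) is in `T`. -/
def SLTLang {A : Type} (k : ℕ) (T : Set (BTile A k)) : Set (Picture A) :=
  { p | tilesOf k p ⊆ T }

/-- The language `R_ℓ` of all one-row pictures over the alphabet `{a, b}`
(here `a = 0`, `b = 1` in `Fin 2`) whose single row spells a word of
`(a^{ℓ-1} b)^+`, i.e. the letter at 0-based column `j` is `b` exactly when
`ℓ` divides `j + 1`. -/
def Rell (ℓ : ℕ) : Set (Picture (Fin 2)) :=
  { p | p.rows = 1 ∧ (∃ m : ℕ, 1 ≤ m ∧ p.cols = ℓ * m) ∧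
      ∀ (i : Fin p.rows) (j : Fin p.cols),
        p.pix i j = if ((j : ℕ) + 1) % ℓ = 0 then 1 else 0 }

/-!
If two blocks of `k` consecutive columns of a picture agree, deleting everything from the first
block up to the second creates no new `(k + 1)`-tile. In a picture wide enough compared with the
local alphabet such a repetition exists by the pigeonhole principle, so a `(k + 1)`-SLT language
containing that picture also contains a narrower one. As `R_ℓ` contains a picture with `ℓ` columns
but none with fewer, its local alphabet cannot be small; tiling systems are the case `k = 1`.
-/

namespace Picture

variable {A : Type} (p : Picture A)

theorem bpix_zero_left (j : ℕ) : p.bpix 0 j = none := by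
  simp [bpix]

theorem bpix_zero_right (i : ℕ) : p.bpix i 0 = none := by
  simp [bpix]

theorem bpix_succ_succ (i j : ℕ) : p.bpix (i + 1) (j + 1) = p.pget i j := by
  simp [bpix, pget]

/-- The picture obtained from `p` by deleting the `d` columns `i, …, i + d - 1` (0-based). If
`p.cols < i + d`, the last `d` columns are deleted instead. -/
def deleteCols (i d : ℕ) (hd : d < p.cols) : Picture A where
  rows := p.rows
  cols := p.cols - d
  rows_pos := p.rows_pos
  cols_pos := Nat.sub_pos_of_lt hd
  pix r c := p.pix r ⟨if c < i then c else c + d, by split_ifs <;> omega⟩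

variable {p} {i d : ℕ} (hd : d < p.cols)

theorem pget_deleteCols_of_lt (hid : i + d ≤ p.cols) (r : ℕ) {c : ℕ} (hc : c < i) :
    (p.deleteCols i d hd).pget r c = p.pget r c := by
  have hcols : c < p.cols - d ↔ c < p.cols := by omega
  simp only [pget, deleteCols, hc, hcols, if_true]

theorem pget_deleteCols_of_le (r : ℕ) {c : ℕ} (hc : i ≤ c) :
    (p.deleteCols i d hd).pget r c = p.pget r (c + d) := by
  have hcols : c < p.cols - d ↔ c + d < p.cols := by omega
  simp only [pget, deleteCols, hc.not_gt, hcols, if_false]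

theorem bpix_deleteCols_of_le (hid : i + d ≤ p.cols) (r : ℕ) {c : ℕ} (hc : c ≤ i) :
    (p.deleteCols i d hd).bpix r c = p.bpix r c := by
  cases r <;> cases c
  case succ.succ r c =>
    rw [bpix_succ_succ, bpix_succ_succ, pget_deleteCols_of_lt hd hid r hc]
  all_goals simp only [bpix_zero_left, bpix_zero_right]

theorem bpix_deleteCols_of_lt (r : ℕ) {c : ℕ} (hc : i < c) :
    (p.deleteCols i d hd).bpix r c = p.bpix r (c + d) := by
  obtain ⟨c, rfl⟩ := Nat.exists_eq_add_one_of_ne_zero hc.ne_bot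
  cases r with
  | zero => simp only [bpix_zero_left]
  | succ r =>
    rw [bpix_succ_succ, Nat.add_right_comm, bpix_succ_succ,
      pget_deleteCols_of_le hd r (Nat.le_of_lt_succ hc)]

variable (p) in
/-- The blocks of `k` consecutive columns of `p` starting at columns `i` and `i + d` (0-based)
agree, counting positions outside `p` as `none`. -/
def BlockRepeats (k i d : ℕ) : Prop :=
  ∀ r s, s < k → p.pget r (i + s) = p.pget r (i + d + s)

theorem BlockRepeats.bpix_eq {k : ℕ} (h : p.BlockRepeats k i d) (r : ℕ) {c : ℕ}
    (hic : i < c) (hck : c ≤ i + k) : p.bpix r c = p.bpix r (c + d) := by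
  obtain ⟨s, rfl⟩ := Nat.exists_eq_add_of_lt hic
  cases r with
  | zero => simp only [bpix_zero_left]
  | succ r =>
    rw [Nat.add_right_comm (i + s) 1 d, bpix_succ_succ, bpix_succ_succ, Nat.add_right_comm i s d]
    exact h r s (by omega)

theorem tilesOf_deleteCols_subset {k : ℕ} (hid : i + d ≤ p.cols) (h : p.BlockRepeats k i d) :
    tilesOf (k + 1) (p.deleteCols i d hd) ⊆ tilesOf (k + 1) p := by
  rintro t ⟨r, c, hr, hc, ht⟩
  have hcols : c + (k + 1) ≤ max (p.cols - d + 2) (k + 1) := hc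
  rcases le_or_gt c i with hci | hic
  · refine ⟨r, c, hr, by unfold borderCols; omega, fun a b => (ht a b).trans ?_⟩
    rcases le_or_gt (c + b : ℕ) i with hle | hlt
    · exact bpix_deleteCols_of_le hd hid _ hle
    · rw [bpix_deleteCols_of_lt hd _ hlt, h.bpix_eq _ hlt (by omega)]
  · refine ⟨r, c + d, hr, by unfold borderCols; omega, fun a b => (ht a b).trans ?_⟩
    rw [bpix_deleteCols_of_lt hd _ (by omega), Nat.add_right_comm]

variable (p) in
theorem exists_blockRepeats [Fintype A] {k : ℕ}
    (hcard : Fintype.card A ^ (k * p.rows) + k ≤ p.cols) :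
    ∃ i d, 0 < d ∧ i + d + k ≤ p.cols ∧ p.BlockRepeats k i d := by
  let block (x : Fin (Fintype.card A ^ (k * p.rows) + 1)) (r : Fin p.rows) (s : Fin k) : A :=
    p.pix r ⟨x + s, by omega⟩
  obtain ⟨x, y, hne, hblock⟩ := Fintype.exists_ne_map_eq_of_card_lt block (by simp [pow_mul])
  wlog hxy : x < y generalizing x y
  · exact this y x hne.symm hblock.symm (lt_of_le_of_ne (not_lt.mp hxy) hne.symm)
  have hadd : (x + (y - x) : ℕ) = y := Nat.add_sub_of_le hxy.le
  refine ⟨x, y - x, Nat.sub_pos_of_lt hxy, by omega, fun r s hs => ?_⟩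
  have hxs : x + s < p.cols := by omega
  have hys : y + s < p.cols := by omega
  rw [hadd]
  by_cases hr : r < p.rows
  · simpa [pget, hr, hxs, hys] using congr_fun₂ hblock ⟨r, hr⟩ ⟨s, hs⟩
  · simp [pget, hr]

end Picture

theorem exists_mem_SLTLang_cols_lt {A : Type} [Fintype A] {k : ℕ} (hk : 0 < k)
    {T : Set (BTile A (k + 1))} {p : Picture A} (hp : p ∈ SLTLang (k + 1) T)
    (hcard : Fintype.card A ^ (k * p.rows) + k ≤ p.cols) :
    ∃ q ∈ SLTLang (k + 1) T, q.rows = p.rows ∧ q.cols < p.cols := by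
  obtain ⟨i, d, hd, hidk, hrep⟩ := p.exists_blockRepeats hcard
  have hdp : d < p.cols := by omega
  exact ⟨p.deleteCols i d hdp,
    (Picture.tilesOf_deleteCols_subset hdp (by omega) hrep).trans hp,
    rfl, Nat.sub_lt p.cols_pos hd⟩

theorem exists_mem_Rell_cols_eq {ℓ : ℕ} (hℓ : 0 < ℓ) : ∃ p ∈ Rell ℓ, p.cols = ℓ :=
  ⟨⟨1, ℓ, one_pos, hℓ, fun _ j => if ((j : ℕ) + 1) % ℓ = 0 then 1 else 0⟩,
    ⟨rfl, ⟨1, le_rfl, (mul_one ℓ).symm⟩, fun _ _ => rfl⟩, rfl⟩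

theorem le_cols_of_mem_Rell {ℓ : ℕ} {p : Picture (Fin 2)} (hp : p ∈ Rell ℓ) : ℓ ≤ p.cols := by
  obtain ⟨-, ⟨m, hm, hcols⟩, -⟩ := hp
  exact hcols ▸ Nat.le_mul_of_pos_right ℓ hm

theorem local_alphabet_lower_bound_general {ℓ k : ℕ} (hk : 0 < k) {Gam : Type} [Fintype Gam]
    {T : Set (BTile Gam (k + 1))} {π : Gam → Fin 2}
    (hT : Picture.map π '' SLTLang (k + 1) T = Rell ℓ) : ℓ < Fintype.card Gam ^ k + k := by
  by_contra! hle
  obtain ⟨w, hw, hwcols⟩ := exists_mem_Rell_cols_eq (show 0 < ℓ by omega)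
  have hwrows : w.rows = 1 := hw.1
  obtain ⟨p, hp, rfl⟩ : w ∈ Picture.map π '' SLTLang (k + 1) T := hT ▸ hw
  change p.rows = 1 at hwrows
  change p.cols = ℓ at hwcols
  obtain ⟨q, hq, -, hlt⟩ :=
    exists_mem_SLTLang_cols_lt hk hp (by rwa [hwrows, mul_one, hwcols])
  have hqR : q.map π ∈ Rell ℓ := hT ▸ Set.mem_image_of_mem _ hq
  exact (hwcols ▸ hlt).not_ge (le_cols_of_mem_Rell hqR)

/-- Every tiling system `({a,b}, Γ, T, π)` recognizing `R_ℓ` has a local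
alphabet of cardinality at least `ℓ`. -/
theorem local_alphabet_lower_bound :
    ∀ ℓ : ℕ, 1 ≤ ℓ →
      ∀ (Gam : Type) (_ : Fintype Gam) (T : Set (BTile Gam 2)) (π : Gam → Fin 2),
        Picture.map π '' SLTLang 2 T = Rell ℓ → ℓ ≤ Fintype.card Gam := by
  intro ℓ _ Gam _ T π hT
  simpa [Nat.lt_succ_iff] using local_alphabet_lower_bound_general one_pos hT
end

section
/- For every k ≥ 2 and every finite alphabet Σ with |Σ| > 1, the family of k-SLT picture languages over Σ is strictly included in the family of (k+1)-SLT picture languages over Σ. -/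
/-- The family of `k`-SLT picture languages over the alphabet `Sig`. -/
def SLTFamily (Sig : Type) (k : ℕ) : Set (Set (Picture Sig)) :=
  { L | ∃ T : Set (BTile Sig k), L = SLTLang k T }

/-!
Whether a picture belongs to a `k`-SLT language depends only on its `k`-tiles, so a language `L` is
`k`-SLT exactly when it contains every picture all of whose `k`-tiles occur in members of `L`.

Each `k`-tile of `p` sits inside a `(k + 1)`-tile of `p`, at offset `0` or `1` in either direction,
and any picture having this larger tile has the smaller one; hence `k`-SLT implies `(k + 1)`-SLT.
The inclusion is strict because a `(k + 1)`-tile free of `#` detects that both sides of a picture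
exceed `k`, whereas a constant picture with at least `k` rows gains no new `k`-tile when one row is
added.
-/

section

variable {A : Type} {k : ℕ} {p q : Picture A}

namespace Picture

theorem bpix_ne_none_iff {i j : ℕ} :
    p.bpix i j ≠ none ↔ (1 ≤ i ∧ i ≤ p.rows) ∧ 1 ≤ j ∧ j ≤ p.cols := by
  simp [bpix, and_assoc]

/-- The picture with rows and columns exchanged, used to derive statements on columns from their
counterparts on rows. -/
def transpose (p : Picture A) : Picture A :=
  ⟨p.cols, p.rows, p.cols_pos, p.rows_pos, fun i j => p.pix j i⟩

theorem bpix_transpose (i j : ℕ) : p.transpose.bpix i j = p.bpix j i := by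
  exact dite_congr (by grind [transpose]) (fun _ => rfl) fun _ => rfl

/-- The constant picture of size `(m, n)`. -/
def replicate (m n : ℕ) (hm : 0 < m) (hn : 0 < n) (x : A) : Picture A :=
  ⟨m, n, hm, hn, fun _ _ => x⟩

theorem bpix_replicate {m n : ℕ} (hm : 0 < m) (hn : 0 < n) (x : A) (i j : ℕ) :
    (replicate m n hm hn x).bpix i j =
      if (1 ≤ i ∧ i ≤ m) ∧ 1 ≤ j ∧ j ≤ n then some x else none := by
  simp only [and_assoc]
  rfl

end Picture

open Picture

theorem mem_sltFamily_iff {L : Set (Picture A)} :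
    L ∈ SLTFamily A k ↔ ∀ p, tilesOf k p ⊆ ⋃ q ∈ L, tilesOf k q → p ∈ L := by
  constructor
  · rintro ⟨T, rfl⟩ p hp
    exact hp.trans (Set.iUnion₂_subset fun _ hq => hq)
  · intro hL
    exact ⟨⋃ q ∈ L, tilesOf k q,
      Set.Subset.antisymm (fun _ hp => Set.subset_biUnion_of_mem hp) hL⟩

theorem exists_position_succ {n i : ℕ} (h : i + k ≤ max (n + 2) k) :
    ∃ i' d, i = i' + d ∧ i' + (k + 1) ≤ max (n + 2) (k + 1) ∧
      (d = 0 ∨ d = 1 ∧ i' + k ≤ n + 1) := by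
  by_cases hi : i + (k + 1) ≤ max (n + 2) (k + 1)
  · exact ⟨i, 0, rfl, hi, .inl rfl⟩
  · exact ⟨i - 1, 1, by omega, by omega, .inr ⟨rfl, by omega⟩⟩

theorem exists_content_index {n j : ℕ} (hn : 0 < n) (hk : k ≠ 0)
    (h : j + (k + 1) ≤ max (n + 2) (k + 1)) : ∃ b ≤ k, 1 ≤ j + b ∧ j + b ≤ n := by
  by_cases hj : j = 0
  · exact ⟨1, by omega⟩
  · exact ⟨0, by omega⟩

theorem add_le_borderRows_of_bpix_eq {i j i' j' d : ℕ}
    (hpq : ∀ a ≤ k, ∀ b ≤ k, p.bpix (i + a) (j + b) = q.bpix (i' + a) (j' + b))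
    (hd : d = 0 ∨ d = 1 ∧ i + k ≤ p.rows + 1)
    (hj : j + (k + 1) ≤ borderCols p (k + 1)) (hi' : i' + (k + 1) ≤ borderRows q (k + 1)) :
    i' + d + k ≤ borderRows q k := by
  unfold borderRows at hi' ⊢
  by_contra! hlt
  -- The only obstruction is that `q` is too short for a second `k`-tile below the first;
  -- then row `k - 1` of the common tile is content in `p` but border in `q`.
  have hq_short : q.rows + 2 ≤ k ∧ d = 1 := by omega
  have hq_pos := q.rows_pos
  obtain ⟨b, hb, hcol⟩ := exists_content_index p.cols_pos (by omega) hj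
  have hp_content : p.bpix (i + (k - 1)) (j + b) ≠ none :=
    bpix_ne_none_iff.2 ⟨by omega, hcol⟩
  rw [hpq _ (by omega) _ hb, bpix_ne_none_iff] at hp_content
  omega

theorem add_le_borderCols_of_bpix_eq {i j i' j' d : ℕ}
    (hpq : ∀ a ≤ k, ∀ b ≤ k, p.bpix (i + a) (j + b) = q.bpix (i' + a) (j' + b))
    (hd : d = 0 ∨ d = 1 ∧ j + k ≤ p.cols + 1)
    (hi : i + (k + 1) ≤ borderRows p (k + 1)) (hj' : j' + (k + 1) ≤ borderCols q (k + 1)) :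
    j' + d + k ≤ borderCols q k := by
  refine add_le_borderRows_of_bpix_eq (p := p.transpose) (q := q.transpose) (i := j) (j := i)
    (j' := i') (fun b hb a ha => ?_) hd hi hj'
  simpa only [bpix_transpose] using hpq a ha b hb

theorem exists_tile_succ_forcing {t : BTile A k} (ht : t ∈ tilesOf k p) :
    ∃ s ∈ tilesOf (k + 1) p, ∀ q, s ∈ tilesOf (k + 1) q → t ∈ tilesOf k q := by
  obtain ⟨i₀, j₀, hi₀, hj₀, ht⟩ := ht
  obtain ⟨i, d, rfl, hi, hd⟩ := exists_position_succ hi₀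
  obtain ⟨j, e, rfl, hj, he⟩ := exists_position_succ hj₀
  refine ⟨fun a b => p.bpix (i + a) (j + b), ⟨i, j, hi, hj, fun _ _ => rfl⟩, ?_⟩
  rintro q ⟨i', j', hi', hj', hs⟩
  have hpq : ∀ a ≤ k, ∀ b ≤ k, p.bpix (i + a) (j + b) = q.bpix (i' + a) (j' + b) :=
    fun a ha b hb => hs ⟨a, by omega⟩ ⟨b, by omega⟩
  refine ⟨i' + d, j' + e, add_le_borderRows_of_bpix_eq hpq hd hj hi',
    add_le_borderCols_of_bpix_eq hpq he hi hj', fun a b => ?_⟩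
  simpa only [ht, add_assoc] using hpq (d + a) (by omega) (e + b) (by omega)

theorem sltFamily_subset_succ (A : Type) (k : ℕ) : SLTFamily A k ⊆ SLTFamily A (k + 1) := by
  intro L hL
  refine mem_sltFamily_iff.2 fun p hp => mem_sltFamily_iff.1 hL p fun t ht => ?_
  obtain ⟨s, hsp, hst⟩ := exists_tile_succ_forcing ht
  obtain ⟨q, hqL, hsq⟩ := Set.mem_iUnion₂.1 (hp hsp)
  exact Set.mem_iUnion₂.2 ⟨q, hqL, hst q hsq⟩

/-- The pictures without a `(k + 1) × (k + 1)` subpicture, that is, with a side of length at most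
`k`. They form the language that separates `(k + 1)`-SLT from `k`-SLT. -/
def thinPictures (A : Type) (k : ℕ) : Set (Picture A) :=
  { p | p.rows ≤ k ∨ p.cols ≤ k }

theorem thinPictures_eq_sltLang :
    thinPictures A k = SLTLang (k + 1) { t | ∃ a b, t a b = none } := by
  ext p
  constructor
  · rintro (hthin : p.rows ≤ k ∨ p.cols ≤ k) t ⟨i, j, -, -, ht⟩
    by_contra hcontent
    have hinside (a b : Fin (k + 1)) :
        (1 ≤ i + a ∧ i + a ≤ p.rows) ∧ 1 ≤ j + b ∧ j + b ≤ p.cols :=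
      bpix_ne_none_iff.1 fun hnone => hcontent ⟨a, b, (ht a b).trans hnone⟩
    have hfirst := hinside 0 0
    have hlast := hinside (Fin.last k) (Fin.last k)
    simp only [Fin.val_zero, Fin.val_last] at hfirst hlast
    omega
  · intro hp
    by_contra (hthick : ¬ (p.rows ≤ k ∨ p.cols ≤ k))
    obtain ⟨a, b, hnone⟩ := hp ⟨1, 1, by unfold borderRows; omega, by unfold borderCols; omega,
      fun _ _ => rfl⟩
    exact bpix_ne_none_iff.2 (by omega) hnone

theorem tilesOf_replicate_succ_subset {m n : ℕ} (hm : 0 < m) (hn : 0 < n) (hkm : k ≤ m) (x : A) :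
    tilesOf k (replicate (m + 1) n m.succ_pos hn x) ⊆ tilesOf k (replicate m n hm hn x) := by
  rintro t ⟨i, j, hi, hj, ht⟩
  have hi : i + k ≤ max (m + 1 + 2) k := hi
  obtain ⟨i', hi', hrow⟩ : ∃ i', i' + k ≤ max (m + 2) k ∧
      ∀ a < k, (1 ≤ i + a ∧ i + a ≤ m + 1 ↔ 1 ≤ i' + a ∧ i' + a ≤ m) := by
    by_cases htop : i ≤ 1
    · exact ⟨i, by omega, by omega⟩
    · exact ⟨i - 1, by omega, by omega⟩
  refine ⟨i', j, hi', hj, fun a b => ?_⟩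
  simp only [ht, bpix_replicate, hrow a a.isLt]

theorem thinPictures_notMem_sltFamily [Nonempty A] (hk : k ≠ 0) :
    thinPictures A k ∉ SLTFamily A k := by
  intro hmem
  obtain ⟨x⟩ := ‹Nonempty A›
  have hk_pos := Nat.pos_of_ne_zero hk
  have hthin : replicate k (k + 1) hk_pos k.succ_pos x ∈ thinPictures A k := .inl le_rfl
  have hthick : replicate (k + 1) (k + 1) k.succ_pos k.succ_pos x ∉ thinPictures A k := by
    simp [thinPictures, replicate]
  refine hthick (mem_sltFamily_iff.1 hmem _ ?_)
  exact (tilesOf_replicate_succ_subset hk_pos k.succ_pos le_rfl x).trans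
    (Set.subset_biUnion_of_mem hthin)

theorem slt_hierarchy_general [Nonempty A] (hk : k ≠ 0) :
    SLTFamily A k ⊂ SLTFamily A (k + 1) :=
  (Set.ssubset_iff_of_subset (sltFamily_subset_succ A k)).2
    ⟨thinPictures A k, ⟨_, thinPictures_eq_sltLang⟩, thinPictures_notMem_sltFamily hk⟩

end

/-- For every `k ≥ 2` and finite alphabet with more than one letter, the
family of `k`-SLT picture languages is strictly included in the family of
`(k+1)`-SLT picture languages. -/
theorem slt_hierarchy :
    ∀ k : ℕ, 2 ≤ k →
      ∀ (Sig : Type) (_ : Fintype Sig), 1 < Fintype.card Sig →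
        SLTFamily Sig k ⊂ SLTFamily Sig (k + 1) := by
  intro k hk Sig _ hcard
  have : Nonempty Sig := Fintype.card_pos_iff.1 (by omega)
  exact slt_hierarchy_general (by omega)
end

section
/- For every k ≥ 2, the family of picture languages recognized by k-tiling systems coincides with the family REC of picture languages recognized by (ordinary, 2-tile) tiling systems. -/
/-- The family of picture languages over `Sig` recognized by `k`-tiling
systems (with a finite local alphabet). -/
def kRec (Sig : Type) (k : ℕ) : Set (Set (Picture Sig)) :=
  { R | ∃ (Gam : Type) (_ : Fintype Gam) (T : Set (BTile Gam k)) (π : Gam → Sig),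
      R = Picture.map π '' SLTLang k T }

/-!
A `k`-tile set is enforced by the `l`-tiles, `k ≤ l`, all of whose `k × k` subtiles it contains.
Conversely, `(k + 1)`-tiles are simulated by `k`-tiles over a larger alphabet: decorate each pixel
with the `2 × 2` window of which it is the top left corner. As `k ≥ 2`, a `k`-tile sees whether
the decorations are correct, and a correctly decorated `k`-tile spells out the `(k + 1)`-tile with
the same top left corner. Iterating this step brings every `k` down to `2`.

The border needs care, since the admissible positions of a tile depend on its size. But for `k ≥ 2`
a tile shows whether its position is admissible, so tiles that no bordered picture contains may be
added to a tile set, after which *all* positions satisfy the tile condition.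
-/

namespace Picture

variable {A B : Type} {p q : Picture A} {i j k : ℕ}

theorem bpix_eq_none_iff :
    p.bpix i j = none ↔ ¬ (1 ≤ i ∧ i ≤ p.rows ∧ 1 ≤ j ∧ j ≤ p.cols) := by
  simp [bpix]

theorem isSome_bpix_iff :
    (p.bpix i j).isSome ↔ 1 ≤ i ∧ i ≤ p.rows ∧ 1 ≤ j ∧ j ≤ p.cols := by
  rw [Option.isSome_iff_ne_none, Ne, bpix_eq_none_iff, not_not]

theorem bpix_map (f : A → B) (p : Picture A) (i j : ℕ) :
    (p.map f).bpix i j = (p.bpix i j).map f := by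
  by_cases h : 1 ≤ i ∧ i ≤ p.rows ∧ 1 ≤ j ∧ j ≤ p.cols <;> simp [bpix, map, h]

/-- The `k × k` window with top left corner `(i, j)` of the picture `p`, continued by `#` over the
whole quadrant. Unlike in `tilesOf`, the corner is arbitrary. -/
def window (k : ℕ) (p : Picture A) (i j : ℕ) : BTile A k :=
  fun a b => p.bpix (i + a) (j + b)

theorem window_mem_tilesOf (hi : i + k ≤ borderRows p k) (hj : j + k ≤ borderCols p k) :
    p.window k i j ∈ tilesOf k p :=
  ⟨i, j, hi, hj, fun _ _ => rfl⟩

theorem mem_SLTLang_iff_window {T : Set (BTile A k)} :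
    p ∈ SLTLang k T ↔
      ∀ i j, i + k ≤ borderRows p k → j + k ≤ borderCols p k → p.window k i j ∈ T := by
  refine ⟨fun hp i j hi hj => hp (window_mem_tilesOf hi hj), ?_⟩
  rintro hp t ⟨i, j, hi, hj, ht⟩
  obtain rfl : t = p.window k i j := funext₂ ht
  exact hp i j hi hj

-- A position is admissible for a `k`-tile iff either it is on the border and the next position is
-- inside the picture, or the last but one position of the tile is inside; the tile shows both.
theorem window_mem_tilesOf_of_mem (hk : 2 ≤ k) (h : p.window k i j ∈ tilesOf k q) :
    p.window k i j ∈ tilesOf k p := by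
  obtain ⟨i', j', hi', hj', hw⟩ := h
  have inside_iff {a b : ℕ} (ha : a < k) (hb : b < k) :
      (1 ≤ i + a ∧ i + a ≤ p.rows ∧ 1 ≤ j + b ∧ j + b ≤ p.cols) ↔
        (1 ≤ i' + a ∧ i' + a ≤ q.rows ∧ 1 ≤ j' + b ∧ j' + b ≤ q.cols) := by
    have hab : p.bpix (i + a) (j + b) = q.bpix (i' + a) (j' + b) := hw ⟨a, ha⟩ ⟨b, hb⟩
    rw [← isSome_bpix_iff, ← isSome_bpix_iff, hab]
  unfold borderRows at hi'
  unfold borderCols at hj'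
  have hrows := q.rows_pos
  have hcols := q.cols_pos
  obtain ⟨x, hx, hxq⟩ : ∃ x < 2, 1 ≤ i' + x ∧ i' + x ≤ q.rows :=
    ⟨1 - i', by omega, by omega, by omega⟩
  obtain ⟨y, hy, hyq⟩ : ∃ y < 2, 1 ≤ j' + y ∧ j' + y ≤ q.cols :=
    ⟨1 - j', by omega, by omega, by omega⟩
  have hxk : x < k := by omega
  have hyk : y < k := by omega
  have hxy := inside_iff hxk hyk
  have hfirstRow := inside_iff (a := 0) (by omega) hyk
  have hfirstCol := inside_iff (b := 0) hxk (by omega)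
  have hlastRow := inside_iff (a := k - 2) (by omega) hyk
  have hlastCol := inside_iff (b := k - 2) hxk (by omega)
  apply window_mem_tilesOf
  · unfold borderRows
    omega
  · unfold borderCols
    omega

end Picture

section TileSets

variable {A : Type} {k l : ℕ}

theorem SLTLang_inter (T T' : Set (BTile A k)) :
    SLTLang k (T ∩ T') = SLTLang k T ∩ SLTLang k T' :=
  Set.ext fun _ => Set.subset_inter_iff

/-- The tile set `T` together with all tiles that occur in no bordered picture. It defines the same
language as `T`, but frees the tile condition from restrictions on the position of the tile. -/
def tileCompletion (T : Set (BTile A k)) : Set (BTile A k) :=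
  T ∪ (⋃ q, tilesOf k q)ᶜ

theorem SLTLang_tileCompletion (T : Set (BTile A k)) :
    SLTLang k (tileCompletion T) = SLTLang k T := by
  refine Set.Subset.antisymm (fun p hp t ht => ?_) fun p hp => hp.trans Set.subset_union_left
  exact (hp ht).resolve_right fun h => h (Set.mem_iUnion_of_mem p ht)

theorem window_mem_tileCompletion (hk : 2 ≤ k) {T : Set (BTile A k)} {p : Picture A}
    (hp : p ∈ SLTLang k T) (i j : ℕ) : p.window k i j ∈ tileCompletion T := by
  by_cases h : p.window k i j ∈ ⋃ q, tilesOf k q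
  · obtain ⟨q, hq⟩ := Set.mem_iUnion.1 h
    exact .inl (hp (Picture.window_mem_tilesOf_of_mem hk hq))
  · exact .inr h

/-- The `k × k` subtile with top left corner `(i, j)` of the `l`-tile `t`. -/
def subTile (t : BTile A l) (i j : ℕ) (hi : i + k ≤ l) (hj : j + k ≤ l) : BTile A k :=
  fun a b => t ⟨i + a, by omega⟩ ⟨j + b, by omega⟩

theorem subTile_window (p : Picture A) (i j : ℕ) {a b : ℕ} (ha : a + k ≤ l) (hb : b + k ≤ l) :
    subTile (p.window l i j) a b ha hb = p.window k (i + a) (j + b) := by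
  funext x y
  simp only [subTile, Picture.window, add_assoc]

/-- The `l`-tiles that enforce the `k`-tile set `T`. Subtiles are only required to lie in
`tileCompletion T`, since an `l`-tile of a small picture may reach beyond all of its `k`-tiles. -/
def liftTiles (l : ℕ) (T : Set (BTile A k)) : Set (BTile A l) :=
  {t | ∀ i j (hi : i + k ≤ l) (hj : j + k ≤ l), subTile t i j hi hj ∈ tileCompletion T}

theorem exists_add_eq_of_add_le_max {i n : ℕ} (hkl : k ≤ l) (hi : i + k ≤ max n k) :
    ∃ i' a, i' + a = i ∧ i' + l ≤ max n l ∧ a + k ≤ l :=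
  ⟨min i (max n l - l), i - min i (max n l - l), by omega, by omega, by omega⟩

theorem SLTLang_liftTiles (hk : 2 ≤ k) (hkl : k ≤ l) (T : Set (BTile A k)) :
    SLTLang l (liftTiles l T) = SLTLang k T := by
  ext p
  constructor <;> intro hp
  · rw [← SLTLang_tileCompletion, Picture.mem_SLTLang_iff_window]
    intro i j hi hj
    obtain ⟨i, a, rfl, hi, ha⟩ := exists_add_eq_of_add_le_max hkl hi
    obtain ⟨j, b, rfl, hj, hb⟩ := exists_add_eq_of_add_le_max hkl hj
    rw [← subTile_window p i j ha hb]
    exact hp (Picture.window_mem_tilesOf hi hj) a b ha hb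
  · rw [Picture.mem_SLTLang_iff_window]
    intro i j _ _ a b ha hb
    rw [subTile_window]
    exact window_mem_tileCompletion hk hp _ _

theorem kRec_mono (Sig : Type) (hk : 2 ≤ k) (hkl : k ≤ l) : kRec Sig k ⊆ kRec Sig l := by
  rintro _ ⟨Gam, hGam, T, π, rfl⟩
  exact ⟨Gam, hGam, liftTiles l T, π, by rw [SLTLang_liftTiles hk hkl]⟩

end TileSets

section Decoration

variable {A : Type} {k : ℕ} {P : Picture (A × BTile A 2)}

/-- The picture `q` with each pixel paired with the `2 × 2` window of which it is the top left
corner. Indices of `Picture.pix` start at `0`, those of `Picture.window` at the border. -/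
def decorate (q : Picture A) : Picture (A × BTile A 2) :=
  ⟨q.rows, q.cols, q.rows_pos, q.cols_pos, fun i j => (q.pix i j, q.window 2 (i + 1) (j + 1))⟩

/-- The `2`-tiles whose top left symbol, unless it is `#`, is decorated with the tile itself,
stripped of its decorations. -/
def coherentTiles (A : Type) : Set (BTile (A × BTile A 2) 2) :=
  {s | ∀ w, s 0 0 = some w → w.2 = fun a b => (s a b).map Prod.fst}

theorem mem_SLTLang_coherentTiles_iff :
    P ∈ SLTLang 2 (coherentTiles A) ↔
      ∀ i j w, P.bpix i j = some w → w.2 = (P.map Prod.fst).window 2 i j := by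
  have window_mem_iff (i j : ℕ) : P.window 2 i j ∈ coherentTiles A ↔
      ∀ w, P.bpix i j = some w → w.2 = (P.map Prod.fst).window 2 i j := by
    simp only [coherentTiles, Set.mem_ofPred_eq, funext_iff, Picture.window, Picture.bpix_map,
      Fin.val_zero, add_zero]
  simp only [Picture.mem_SLTLang_iff_window, window_mem_iff]
  refine ⟨fun hP i j w hw => ?_, fun hP i j _ _ => hP i j⟩
  have hij := Picture.isSome_bpix_iff.1 (Option.isSome_of_eq_some hw)
  exact hP i j (by unfold borderRows; omega) (by unfold borderCols; omega) w hw

theorem decorate_mem_SLTLang_coherentTiles (q : Picture A) :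
    decorate q ∈ SLTLang 2 (coherentTiles A) := by
  rw [mem_SLTLang_coherentTiles_iff]
  intro i j w hw
  obtain ⟨hi, -, hj, -⟩ := Picture.isSome_bpix_iff.1 (Option.isSome_of_eq_some hw)
  obtain ⟨i, rfl⟩ := Nat.exists_eq_add_of_le' hi
  obtain ⟨j, rfl⟩ := Nat.exists_eq_add_of_le' hj
  obtain ⟨_, hpix⟩ := Option.dite_none_right_eq_some.1 hw
  obtain rfl := Option.some.inj hpix
  rfl

/-- The `(k + 1)`-tile spelled out by a `k`-tile of decorated symbols: its last row and column are
read off the decorations in the last row and column of the `k`-tile. By truncation, `a - (k - 1)` is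
`1` if `a = k` and `0` otherwise. -/
def expandTile (hk : 0 < k) (s : BTile (A × BTile A 2) k) : BTile A (k + 1) := fun a b =>
  (s ⟨min (a : ℕ) (k - 1), by omega⟩ ⟨min (b : ℕ) (k - 1), by omega⟩).bind fun w =>
    w.2 ⟨a - (k - 1), by omega⟩ ⟨b - (k - 1), by omega⟩

theorem expandTile_window (hk : 2 ≤ k) (hP : P ∈ SLTLang 2 (coherentTiles A)) (i j : ℕ) :
    expandTile (by omega) (P.window k i j) = (P.map Prod.fst).window (k + 1) i j := by
  funext a b
  simp only [expandTile, Picture.window]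
  cases hw : P.bpix (i + min (a : ℕ) (k - 1)) (j + min (b : ℕ) (k - 1)) with
  | none =>
    -- Row and column `k - 1 ≠ 0` of the tile are not on the top or left border, so beyond a `#`
    -- there only `#` can follow.
    rw [Picture.bpix_eq_none_iff] at hw
    rw [Picture.bpix_map, Picture.bpix_eq_none_iff.2 (by omega)]
    rfl
  | some w =>
    rw [Option.bind_some, mem_SLTLang_coherentTiles_iff.1 hP _ _ w hw]
    simp only [Picture.window]
    congr 1 <;> omega

theorem mem_SLTLang_expandTile_iff (hk : 2 ≤ k) (hP : P ∈ SLTLang 2 (coherentTiles A))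
    (T : Set (BTile A (k + 1))) :
    P ∈ SLTLang k {s | expandTile (by omega) s ∈ tileCompletion T} ↔
      P.map Prod.fst ∈ SLTLang (k + 1) T := by
  constructor <;> intro h
  · rw [← SLTLang_tileCompletion, Picture.mem_SLTLang_iff_window]
    intro i j hi hj
    rw [← expandTile_window hk hP]
    simp only [borderRows, borderCols, Picture.map] at hi hj
    refine h (Picture.window_mem_tilesOf ?_ ?_)
    · unfold borderRows
      omega
    · unfold borderCols
      omega
  · rw [Picture.mem_SLTLang_iff_window]
    intro i j _ _
    rw [Set.mem_ofPred_eq, expandTile_window hk hP]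
    exact window_mem_tileCompletion (by omega) h i j

theorem SLTLang_succ_eq_image_map_fst (hk : 2 ≤ k) (T : Set (BTile A (k + 1))) :
    SLTLang (k + 1) T = Picture.map Prod.fst '' SLTLang k
      (liftTiles k (coherentTiles A) ∩ {s | expandTile (by omega) s ∈ tileCompletion T}) := by
  rw [SLTLang_inter, SLTLang_liftTiles le_rfl hk]
  ext q
  constructor
  · intro hq
    have hcoh := decorate_mem_SLTLang_coherentTiles q
    exact ⟨decorate q, ⟨hcoh, (mem_SLTLang_expandTile_iff hk hcoh T).2 hq⟩, rfl⟩
  · rintro ⟨P, ⟨hcoh, hP⟩, rfl⟩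
    exact (mem_SLTLang_expandTile_iff hk hcoh T).1 hP

theorem kRec_succ_subset (Sig : Type) (hk : 2 ≤ k) : kRec Sig (k + 1) ⊆ kRec Sig k := by
  rintro _ ⟨Gam, _, T, π, rfl⟩
  rw [SLTLang_succ_eq_image_map_fst hk, Set.image_image]
  exact ⟨Gam × BTile Gam 2, inferInstance, _, π ∘ Prod.fst, rfl⟩

end Decoration

theorem kRec_eq_REC_general {k : ℕ} (hk : 2 ≤ k) (Sig : Type) : kRec Sig k = kRec Sig 2 := by
  induction k, hk using Nat.le_induction with
  | base => rfl
  | succ k hk ih =>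
    exact (Set.Subset.antisymm (kRec_succ_subset Sig hk) (kRec_mono Sig hk k.le_succ)).trans ih

/-- For every `k ≥ 2`, the family of languages recognized by `k`-tiling
systems coincides with the family REC of languages recognized by ordinary
(2-tile) tiling systems. -/
theorem kRec_eq_REC :
    ∀ k : ℕ, 2 ≤ k →
      ∀ (Sig : Type) (_ : Fintype Sig), kRec Sig k = kRec Sig 2 :=
  fun _ hk Sig _ => kRec_eq_REC_general hk Sig
end

section
/- Let k ≥ 3, let Y_hor, Y_vert ⊆ Λ^k be comma-free word codes of length k, and let w ∈ {t,f}^k be an obligation word. Then the picture code X ⊆ Λ^{k,k} consisting of all k×k pictures whose first column is a word of Y_vert and whose i-th row is a word of Y_hor for every position i with w_i = t is a comma-free picture code. -/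
/-- A square picture of size `k × k` over `A` (no border symbol). -/
abbrev SqTile (A : Type) (k : ℕ) := Fin k → Fin k → A

/-- `x` occurs as a contiguous `k × k` subpicture of `p` with top-left
corner at position (i,j) (0-based). -/
def hasSqAt {A : Type} {k : ℕ} (p : Picture A) (i j : ℕ) (x : SqTile A k) : Prop :=
  ∀ a b : Fin k, p.pget (i + (a : ℕ)) (j + (b : ℕ)) = some (x a b)

/-- `X^{++}` : the pictures tessellated by an `r × c` grid (`r, c ≥ 1`) of
pictures of `X`. -/
def gridLang {A : Type} (k : ℕ) (X : Set (SqTile A k)) : Set (Picture A) :=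
  { p | k ∣ p.rows ∧ k ∣ p.cols ∧
      ∀ i j : ℕ, i * k + k ≤ p.rows → j * k + k ≤ p.cols →
        ∃ x ∈ X, hasSqAt p (i * k) (j * k) x }

/-- A comma-free picture code: no element of `X` occurs as an internal
`k × k` subpicture of any picture of `X^{2,2}` (the pictures of `gridLang`
of size `2k × 2k`). A subpicture at (i,j) is internal when its cells meet
neither the first nor the last row, and neither the first nor the last
column. -/
def IsCommaFree {A : Type} (k : ℕ) (X : Set (SqTile A k)) : Prop :=
  ∀ p : Picture A, p.rows = 2 * k → p.cols = 2 * k → p ∈ gridLang k X →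
    ∀ (i j : ℕ) (x : SqTile A k), x ∈ X → hasSqAt p i j x →
      ¬(1 ≤ i ∧ i + k < p.rows ∧ 1 ≤ j ∧ j + k < p.cols)

/-- The concatenation of two words of length `k` (as functions), read at
position `n` (0-based); `none` beyond position `2k - 1`. -/
def wordCat {A : Type} {k : ℕ} (u v : Fin k → A) (n : ℕ) : Option A :=
  if h : n < k then some (u ⟨n, h⟩)
  else if h2 : n < 2 * k then some (v ⟨n - k, by omega⟩)
  else none

/-- A comma-free word code of length `k`: no word of `Y` occurs as a factor
of a concatenation of two words of `Y` at a proper internal position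
(equivalently `Y² ∩ yYz = ∅` for all nonempty words `y, z`). -/
def IsCFWordCode {A : Type} (k : ℕ) (Y : Set (Fin k → A)) : Prop :=
  ∀ u ∈ Y, ∀ v ∈ Y, ∀ x ∈ Y, ∀ i : ℕ, 1 ≤ i → i < k →
    ¬(∀ a : Fin k, wordCat u v (i + (a : ℕ)) = some (x a))

/-- An obligation word `w ∈ {t, f}^k` (`t = true`): for every cyclic
rotation of `w` there is a position where both `w` and the rotation carry
`t`. -/
def IsObligation {k : ℕ} (w : Fin k → Bool) : Prop :=
  ∀ r : Fin k, ∃ i : Fin k, w i = true ∧ w (i + r) = true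

/-! Compare an internal occurrence of `x` at `(i, j)` with the code-pictures of the grid along a
single row. Applied to the rotation by `i`, the obligation condition supplies a row `a` of `x` and a
row `c` of the grid blocks which lie on the same row of the big picture and both carry a `t`. On
that row a word of `Yhor` would sit strictly inside the concatenation of two words of `Yhor`. -/

theorem IsObligation.exists_aligned {k : ℕ} {w : Fin k → Bool} (hw : IsObligation w) {i : ℕ}
    (hi : i < k) :
    ∃ a c : Fin k, w a = true ∧ w c = true ∧ ∃ I < 2, I * k + (c : ℕ) = i + (a : ℕ) := by
  obtain ⟨a, ha, hc⟩ := hw ⟨i, hi⟩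
  refine ⟨a, a + ⟨i, hi⟩, ha, hc, (a + i) / k, ?_, ?_⟩
  · exact Nat.div_lt_of_lt_mul (by omega)
  · rw [Fin.val_add, Nat.div_add_mod', Nat.add_comm]

section Rows

variable {A : Type} {k : ℕ} {p : Picture A}

theorem exists_hasSqAt_pair_of_mem_gridLang {X : Set (SqTile A k)} (hp : p ∈ gridLang k X)
    {I J : ℕ} (hI : (I + 1) * k ≤ p.rows) (hJ : (J + 2) * k ≤ p.cols) :
    ∃ u ∈ X, ∃ v ∈ X, hasSqAt p (I * k) (J * k) u ∧ hasSqAt p (I * k) (J * k + k) v := by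
  obtain ⟨u, hu, hpu⟩ := hp.2.2 I J (by linarith) (by linarith)
  obtain ⟨v, hv, hpv⟩ := hp.2.2 I (J + 1) (by linarith) (by linarith)
  exact ⟨u, hu, v, hv, hpu, by rwa [Nat.succ_mul] at hpv⟩

theorem pget_eq_wordCat_of_hasSqAt {r s : ℕ} {u v : SqTile A k} (hu : hasSqAt p r s u)
    (hv : hasSqAt p r (s + k) v) (c : Fin k) {n : ℕ} (hn : n < 2 * k) :
    p.pget (r + c) (s + n) = wordCat (u c) (v c) n := by
  unfold wordCat
  split_ifs with hnk
  · exact hu c ⟨n, hnk⟩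
  · have hpv := hv c ⟨n - k, by omega⟩
    rwa [show s + k + (n - k) = s + n by omega] at hpv

theorem IsCFWordCode.row_notMem_of_hasSqAt {Y : Set (Fin k → A)} (hY : IsCFWordCode k Y)
    {r s i j : ℕ} {u v x : SqTile A k} (hu : hasSqAt p r s u) (hv : hasSqAt p r (s + k) v)
    (hx : hasSqAt p i (s + j) x) (hj : 1 ≤ j) (hjk : j < k) {a c : Fin k}
    (hac : r + (c : ℕ) = i + (a : ℕ)) (huY : u c ∈ Y) (hvY : v c ∈ Y) : x a ∉ Y := by
  intro hxY
  refine hY (u c) huY (v c) hvY (x a) hxY j hj hjk fun b => ?_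
  calc wordCat (u c) (v c) (j + b)
      = p.pget (r + c) (s + (j + b)) :=
        (pget_eq_wordCat_of_hasSqAt hu hv c (by omega)).symm
    _ = p.pget (i + a) (s + j + b) := by rw [hac, Nat.add_assoc]
    _ = some (x a b) := hx a b

end Rows

theorem commaFree_family_general {k : ℕ} {A : Type} {Yhor : Set (Fin k → A)}
    (hY : IsCFWordCode k Yhor) {w : Fin k → Bool} (hw : IsObligation w) {X : Set (SqTile A k)}
    (hX : ∀ x ∈ X, ∀ i : Fin k, w i = true → x i ∈ Yhor) : IsCommaFree k X := by
  rintro p hrows hcols hp i j x hx hpx ⟨-, hik, hj, hjk⟩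
  obtain ⟨a, c, ha, hc, I, hI, hac⟩ := hw.exists_aligned (i := i) (by omega)
  obtain ⟨u, hu, v, hv, hpu, hpv⟩ := exists_hasSqAt_pair_of_mem_gridLang hp (I := I) (J := 0)
    (hrows ▸ Nat.mul_le_mul_right k hI) (by rw [hcols])
  have hpx₀ : hasSqAt p i (0 * k + j) x := by rwa [Nat.zero_mul, Nat.zero_add]
  exact hY.row_notMem_of_hasSqAt hpu hpv hpx₀ hj (by omega) hac (hX u hu c hc) (hX v hv c hc)
    (hX x hx a ha)

/-- Given comma-free word codes `Y_hor, Y_vert` of length `k ≥ 3` and an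
obligation word `w`, the set of all `k × k` pictures whose first column is
a word of `Y_vert` and whose `i`-th row is a word of `Y_hor` for every
position `i` with `w i = t` is a comma-free picture code. -/
theorem commaFree_family :
    ∀ k : ℕ, ∀ hk : 3 ≤ k, ∀ (Lam : Type) (Yhor Yvert : Set (Fin k → Lam)),
      IsCFWordCode k Yhor → IsCFWordCode k Yvert →
      ∀ w : Fin k → Bool, IsObligation w →
      IsCommaFree k
        { x : SqTile Lam k |
          (fun i => x i ⟨0, by omega⟩) ∈ Yvert ∧
          ∀ i : Fin k, w i = true → (fun j => x i j) ∈ Yhor } := by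
  intro k _ Lam Yhor Yvert hYhor _ w hw
  exact commaFree_family_general hYhor hw fun _ hx => hx.2
end

section
/- For every prime number k ≥ 3, there exists a comma-free picture code X ⊆ {0,1}^{k,k} whose cardinality satisfies |X| ≥ 2^{k²−k} / (k+1)^{2√k}. -/
open Set Function

lemma hasSqAt.apply_eq {A : Type} {k : ℕ} {p : Picture A} {i j i' j' : ℕ} {x y : SqTile A k}
    (hx : hasSqAt p i j x) (hy : hasSqAt p i' j' y) {a b a' b' : Fin k}
    (hrow : i + (a : ℕ) = i' + a') (hcol : j + (b : ℕ) = j' + b') : x a b = y a' b' := by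
  rw [← Option.some_inj, ← hx a b, ← hy a' b', hrow, hcol]

/-- The words over `A` indexed by `ι` that are constantly `a` neither on the positions up to `m`
nor on the positions from `m` on. They serve as the non-first rows of code-pictures. -/
def mixedRows {A ι : Type*} [LinearOrder ι] (a : A) (m : ι) : Set (ι → A) :=
  {w | ¬EqOn w (const ι a) (Iic m) ∧ ¬EqOn w (const ι a) (Ici m)}

/-- The picture code whose code-pictures have a constant first row `a … a`, which marks where a
code-picture starts, and rows in `mixedRows a m` below it. -/
def markedCode {A : Type} {k : ℕ} (a : A) (m : Fin k) : Set (SqTile A k) :=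
  univ.pi fun i ↦ if (i : ℕ) = 0 then {const (Fin k) a} else mixedRows a m

section CommaFree

variable {A : Type} {k : ℕ} {a : A} {m : Fin k} {x : SqTile A k}

lemma markedCode_first_row (hx : x ∈ markedCode a m) {i : Fin k} (hi : (i : ℕ) = 0) (j : Fin k) :
    x i j = a := by
  have hrow : x i = const (Fin k) a := by
    simpa only [if_pos hi, mem_singleton_iff] using hx i (mem_univ i)
  rw [hrow, const_apply]

lemma markedCode_row_mem (hx : x ∈ markedCode a m) {i : Fin k} (hi : (i : ℕ) ≠ 0) :
    x i ∈ mixedRows a m := by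
  simpa only [if_neg hi] using hx i (mem_univ i)

theorem isCommaFree_markedCode (a : A) (m : Fin k) : IsCommaFree k (markedCode a m) := by
  rintro p hrows hcols ⟨-, -, hgrid⟩ i j x hx hxp ⟨hi, hik, hj, hjk⟩
  obtain ⟨left, hleft, hleftp⟩ := hgrid 0 0 (by omega) (by omega)
  obtain ⟨right, hright, hrightp⟩ := hgrid 0 1 (by omega) (by omega)
  let top : Fin k := ⟨0, m.pos⟩
  let crossed : Fin k := ⟨i, by omega⟩
  have hcrossed : (crossed : ℕ) ≠ 0 := Nat.ne_of_gt hi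
  have hrow : 0 * k + (crossed : ℕ) = i + top := by simp [crossed, top]
  rcases le_or_gt j m with hjm | hmj
  · refine (markedCode_row_mem hleft hcrossed).2 fun c (hc : (m : ℕ) ≤ c) ↦ ?_
    calc left crossed c = x top ⟨c - j, by omega⟩ :=
          hleftp.apply_eq hxp hrow (by dsimp only; omega)
      _ = a := markedCode_first_row hx rfl _
  · refine (markedCode_row_mem hright hcrossed).1 fun c (hc : (c : ℕ) ≤ m) ↦ ?_
    calc right crossed c = x top ⟨k + c - j, by omega⟩ :=
          hrightp.apply_eq hxp hrow (by dsimp only; omega)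
      _ = a := markedCode_first_row hx rfl _

end CommaFree

section Counting

lemma ncard_univ_pi {ι : Type*} [Fintype ι] {α : ι → Type*} (s : ∀ i, Set (α i)) :
    (univ.pi s).ncard = ∏ i, (s i).ncard := by
  simp_rw [← Nat.card_coe_set_eq, Nat.card_congr (Equiv.Set.univPi s), Nat.card_pi]

lemma ncard_setOf_eqOn {A ι : Type*} [Finite ι] (f : ι → A) (s : Set ι) :
    {w | EqOn w f s}.ncard = Nat.card A ^ sᶜ.ncard := by
  classical
  have := Fintype.ofFinite ι
  have hpi : {w | EqOn w f s} = univ.pi fun i ↦ if i ∈ s then {f i} else univ := by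
    ext w
    refine forall_congr' fun i ↦ ?_
    by_cases hi : i ∈ s <;> simp [hi]
  rw [hpi, ncard_univ_pi]
  simp [apply_ite, Finset.prod_ite, ← ncard_coe_finset, compl_def]

lemma card_pow_card_le_ncard_mixedRows_add {A ι : Type*} [Finite A] [Finite ι] [LinearOrder ι]
    (a : A) (m : ι) :
    Nat.card A ^ Nat.card ι ≤
      (mixedRows a m).ncard + (Nat.card A ^ (Ioi m).ncard + Nat.card A ^ (Iio m).ncard) := by
  have hcompl : (mixedRows a m)ᶜ =
      {w | EqOn w (const ι a) (Iic m)} ∪ {w | EqOn w (const ι a) (Ici m)} := by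
    ext w
    simp only [mixedRows, mem_compl_iff, mem_ofPred_eq, mem_union]
    tauto
  rw [← Nat.card_fun, ← ncard_add_ncard_compl (mixedRows a m), hcompl, ← compl_Iic, ← compl_Ici,
    ← ncard_setOf_eqOn (const ι a), ← ncard_setOf_eqOn (const ι a)]
  gcongr
  exact ncard_union_le _ _

lemma ncard_markedCode {A : Type} {k : ℕ} (a : A) (m : Fin k) :
    (markedCode a m).ncard = (mixedRows a m).ncard ^ (k - 1) := by
  obtain ⟨n, rfl⟩ : ∃ n, k = n + 1 := Nat.exists_eq_add_one.mpr m.pos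
  rw [markedCode, ncard_univ_pi, Fin.prod_univ_succ]
  simp

end Counting

section Bounds

lemma two_pow_mul_pow_add_pow_le {q k : ℕ} (hq : 2 ≤ q) (hk : 0 < k) :
    2 * 2 ^ (k / 2) * (q ^ (k - 1 - k / 2) + q ^ (k / 2)) ≤ 3 * q ^ k := by
  have hle_mid : 2 ^ (k / 2 + 1) * q ^ (k - 1 - k / 2) ≤ q ^ k := by
    calc 2 ^ (k / 2 + 1) * q ^ (k - 1 - k / 2)
        ≤ q ^ (k / 2 + 1) * q ^ (k - 1 - k / 2) := by gcongr
      _ = q ^ k := by rw [← pow_add]; congr 1; omega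
  have hge_mid : 2 ^ (k / 2) * q ^ (k / 2) ≤ q ^ k := by
    calc 2 ^ (k / 2) * q ^ (k / 2) ≤ q ^ (k / 2) * q ^ (k / 2) := by gcongr
      _ = q ^ (k / 2 + k / 2) := (pow_add _ _ _).symm
      _ ≤ q ^ k := Nat.pow_le_pow_right (by omega) (by omega)
  rw [pow_succ] at hle_mid
  linarith

lemma one_div_sixteen_le_pow {t : ℝ} {h n : ℕ} (ht₀ : 0 ≤ t) (ht₁ : t ≤ 1)
    (ht : 2 * 2 ^ h * (1 - t) ≤ 3) (hn : n ≤ 2 * h) : 1 / 16 ≤ t ^ n := by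
  have hh : (2 * h : ℝ) ≤ 2 ^ h := by
    exact_mod_cast Nat.mul_le_pow (by norm_num) h
  have hdefect : h * (1 - t) ≤ 3 / 4 := by nlinarith
  have hbernoulli : 1 / 4 ≤ t ^ h := by
    have := one_add_mul_le_pow (a := t - 1) (by linarith) h
    rw [add_sub_cancel] at this
    linarith
  calc (1 / 16 : ℝ) = (1 / 4) ^ 2 := by norm_num
    _ ≤ (t ^ h) ^ 2 := by gcongr
    _ = t ^ (2 * h) := by rw [← pow_mul, mul_comm]
    _ ≤ t ^ n := pow_le_pow_of_le_one ht₀ ht₁ hn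

lemma sixteen_le_add_one_rpow {x : ℝ} (hx : 3 ≤ x) : 16 ≤ (x + 1) ^ (2 * √x) := by
  have hsqrt : 1 ≤ √x := Real.one_le_sqrt.mpr (by linarith)
  calc (16 : ℝ) ≤ (x + 1) ^ 2 := by nlinarith
    _ = (x + 1) ^ (2 : ℝ) := (Real.rpow_two _).symm
    _ ≤ (x + 1) ^ (2 * √x) := Real.rpow_le_rpow_of_exponent_le (by linarith) (by linarith)

end Bounds

theorem card_pow_div_sixteen_le_ncard_markedCode {A : Type} [Finite A] [Nontrivial A] {k : ℕ}
    (hk : 0 < k) (a : A) :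
    (Nat.card A : ℝ) ^ (k * (k - 1)) / 16 ≤
      (markedCode a ⟨k / 2, Nat.div_lt_self hk one_lt_two⟩).ncard := by
  set m : Fin k := ⟨k / 2, Nat.div_lt_self hk one_lt_two⟩
  set q := Nat.card A
  set r := (mixedRows a m).ncard
  have hq : 2 ≤ q := Finite.one_lt_card
  have hpos : (0 : ℝ) < q ^ k := by positivity
  have hr : (r : ℝ) ≤ q ^ k := by
    have := ncard_le_card (mixedRows a m)
    rw [Nat.card_fun, Nat.card_fin] at this
    exact_mod_cast this
  have hdefect : 2 * 2 ^ (k / 2) * (1 - (r : ℝ) / q ^ k) ≤ 3 := by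
    have hrows : q ^ k ≤ r + (q ^ (k - 1 - k / 2) + q ^ (k / 2)) := by
      simpa [ncard_eq_toFinset_card', m] using card_pow_card_le_ncard_mixedRows_add a m
    have hexcluded : (q : ℝ) ^ k - r ≤ q ^ (k - 1 - k / 2) + q ^ (k / 2) := by
      rw [sub_le_iff_le_add']
      exact_mod_cast hrows
    rw [one_sub_div hpos.ne', ← mul_div_assoc, div_le_iff₀ hpos]
    calc 2 * 2 ^ (k / 2) * ((q : ℝ) ^ k - r)
        ≤ 2 * 2 ^ (k / 2) * (q ^ (k - 1 - k / 2) + q ^ (k / 2)) := by gcongr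
      _ ≤ 3 * q ^ k := by exact_mod_cast two_pow_mul_pow_add_pow_le hq hk
  have hfraction : 1 / 16 ≤ ((r : ℝ) / q ^ k) ^ (k - 1) :=
    one_div_sixteen_le_pow (by positivity) (div_le_one_of_le₀ hr hpos.le) hdefect (by omega)
  rw [div_pow, ← pow_mul, le_div_iff₀ (by positivity)] at hfraction
  rw [ncard_markedCode, Nat.cast_pow]
  linarith

theorem commaFree_numerosity_general {A : Type} [Finite A] [Nontrivial A] {k : ℕ} (hk : 0 < k) :
    ∃ X : Set (SqTile A k), IsCommaFree k X ∧
      (Nat.card A : ℝ) ^ ((k : ℝ) ^ 2 - (k : ℝ)) / 16 ≤ (X.ncard : ℝ) := by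
  obtain ⟨a⟩ := ‹Nontrivial A›.to_nonempty
  refine ⟨markedCode a _, isCommaFree_markedCode a _,
    le_of_eq_of_le ?_ (card_pow_div_sixteen_le_ncard_markedCode hk a)⟩
  have hexp : (k : ℝ) ^ 2 - k = (k * (k - 1) : ℕ) := by
    rw [Nat.cast_mul, Nat.cast_pred hk]
    ring
  rw [hexp, Real.rpow_natCast]

/-- For every prime `k ≥ 3` there is a binary comma-free picture code of
size `k × k` with at least `2^(k² - k) / (k+1)^(2√k)` code-pictures. -/
theorem commaFree_numerosity :
    ∀ k : ℕ, Nat.Prime k → 3 ≤ k →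
      ∃ X : Set (SqTile Bool k), IsCommaFree k X ∧
        (2 : ℝ) ^ ((k : ℝ) ^ 2 - (k : ℝ)) / ((k : ℝ) + 1) ^ (2 * Real.sqrt (k : ℝ))
          ≤ (X.ncard : ℝ) := by
  intro k _ hk
  obtain ⟨X, hX, hcard⟩ := commaFree_numerosity_general (A := Bool) (by omega : 0 < k)
  have hfactor := sixteen_le_add_one_rpow (x := k) (by exact_mod_cast hk)
  rw [Nat.card_eq_fintype_card, Fintype.card_bool, Nat.cast_two] at hcard
  exact ⟨X, hX, (div_le_div_of_nonneg_left (by positivity) (by norm_num) hfactor).trans hcard⟩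
end

section
/- Let k ≥ 3 and let q be an integer with 1 ≤ q < k/2. Then the word w ∈ {t,f}^k defined by w_i = t if and only if (1 ≤ i ≤ q) or (q < i ≤ k and q divides i) is an obligation word. -/
/-!
Every residue class modulo `q` meets the initial block of `q` letters `t`, so a shift of this block
by `r` that stays inside the word hits a multiple of `q`. A shift of the block that leaves the word
wraps around onto the first letter, which lies in the block itself.
-/

theorem exists_lt_dvd_add {q : ℕ} (hq : 0 < q) (n : ℕ) : ∃ s < q, q ∣ s + n := by
  have : NeZero q := ⟨hq.ne'⟩
  refine ⟨(-(n : ZMod q)).val, ZMod.val_lt _, (ZMod.natCast_eq_zero_iff _ _).mp ?_⟩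
  rw [Nat.cast_add, ZMod.natCast_zmod_val, neg_add_cancel]

section InitialBlock

variable {k q : ℕ} {w : Fin k → Bool} {r : Fin k}

theorem exists_overlap_of_add_le (hq : 0 < q) (hblock : ∀ i : Fin k, (i : ℕ) < q → w i = true)
    (hmul : ∀ i : Fin k, q ∣ (i : ℕ) + 1 → w i = true) (hr : (r : ℕ) + q ≤ k) :
    ∃ i, w i = true ∧ w (i + r) = true := by
  obtain ⟨s, hsq, hdvd⟩ := exists_lt_dvd_add hq ((r : ℕ) + 1)
  have no_wrap : s + r < k := by omega
  refine ⟨⟨s, by omega⟩, hblock _ hsq, hmul _ ?_⟩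
  rwa [Fin.val_add, Nat.mod_eq_of_lt no_wrap, add_assoc]

theorem exists_overlap_of_lt_add (hblock : ∀ i : Fin k, (i : ℕ) < q → w i = true)
    (hr : k < (r : ℕ) + q) : ∃ i, w i = true ∧ w (i + r) = true := by
  have : NeZero k := r.neZero
  have neg_val_lt : ((-r : Fin k) : ℕ) < q :=
    calc ((-r : Fin k) : ℕ) = (k - r) % k := Fin.val_neg' r
      _ ≤ k - r := Nat.mod_le _ _
      _ < q := by omega
  have sum_val_lt : ((-r + r : Fin k) : ℕ) < q := by
    rw [neg_add_cancel, Fin.val_zero]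
    omega
  exact ⟨-r, hblock _ neg_val_lt, hblock _ sum_val_lt⟩

theorem obligation_word_construction_general (hq : 0 < q)
    (hblock : ∀ i : Fin k, (i : ℕ) < q → w i = true)
    (hmul : ∀ i : Fin k, q ∣ (i : ℕ) + 1 → w i = true) : IsObligation w := by
  intro r
  rcases le_or_gt ((r : ℕ) + q) k with stays_inside | wraps
  · exact exists_overlap_of_add_le hq hblock hmul stays_inside
  · exact exists_overlap_of_lt_add hblock wraps

end InitialBlock

/-- For `k ≥ 3` and `1 ≤ q < k/2`, the word `w ∈ {t,f}^k` whose (1-based)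
position `i` carries `t` iff `1 ≤ i ≤ q`, or `q < i ≤ k` and `q ∣ i`, is an
obligation word.  (Positions of `Fin k` are 0-based, so position `i : Fin k`
corresponds to the 1-based position `i + 1`.) -/
theorem obligation_word_construction :
    ∀ k q : ℕ, 3 ≤ k → 1 ≤ q → 2 * q < k →
      IsObligation (fun i : Fin k =>
        decide ((i : ℕ) + 1 ≤ q ∨ (q < (i : ℕ) + 1 ∧ q ∣ (i : ℕ) + 1))) := by
  intro k q _ hq _
  refine obligation_word_construction_general hq (fun i hi => decide_eq_true (Or.inl hi))
    fun i hi => decide_eq_true ((le_or_gt _ _).imp_right fun hlt => ⟨hlt, hi⟩)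
end
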